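/- Define ρ_N(p) = 1 − (1−p)^N, P↓↓_N(p) = N p² (1−p)^{N−1} / (1 − (1−p)^N)², P↕_N(p) = p² (1 − (1−p)^{2N}) / ((1 − (1−p)^N)² (1 − (1−p)²)), and λ_N(p) = (P↕_N(p) + (1 − ρ_N(p))·P↓↓_N(p)) / (2 − ρ_N(p)). For all integers N_2, N_3 with 2 ≤ N_2 < N_3 ≤ 30 and all real p with 0 < p < 1: (1 − λ_{N_3}(p))·ρ_{N_3}(p)·N_2 − λ_{N_2}(ρ_{N_3}(p))·ρ_{N_2·N_3}(p) < (1 − λ_{N_2}(p))·ρ_{N_2}(p)·N_3 − λ_{N_3}(ρ_{N_2}(p))·ρ_{N_2·N_3}(p). (Here one uses the identity ρ_{N_2}(ρ_{N_3}(p)) = ρ_{N_2·N_3}(p).) -/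

import Mathlib

/-- `ρ_N(p) = 1 − (1−p)^N`. -/
noncomputable def rho (N : ℕ) (p : ℝ) : ℝ := 1 - (1 - p) ^ N

/-- `P↓↓_N(p) = N p² (1−p)^{N−1} / (1 − (1−p)^N)²`. -/
noncomputable def Pdd (N : ℕ) (p : ℝ) : ℝ :=
  (N : ℝ) * p ^ 2 * (1 - p) ^ (N - 1) / (1 - (1 - p) ^ N) ^ 2

/-- `P↕_N(p) = p² (1 − (1−p)^{2N}) / ((1 − (1−p)^N)² (1 − (1−p)²))`. -/
noncomputable def Pud (N : ℕ) (p : ℝ) : ℝ :=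
  p ^ 2 * (1 - (1 - p) ^ (2 * N)) / ((1 - (1 - p) ^ N) ^ 2 * (1 - (1 - p) ^ 2))

/-- `λ_N(p) = (P↕_N(p) + (1 − ρ_N(p))·P↓↓_N(p)) / (2 − ρ_N(p))`. -/
noncomputable def lam (N : ℕ) (p : ℝ) : ℝ :=
  (Pud N p + (1 - rho N p) * Pdd N p) / (2 - rho N p)

/-!
Write `p = 1 - exp (-t)`, `u = N₂ t`, `v = N₃ t`, `c = N₂ N₃ t`. With
`K(s, t) = (cosh t - 1) / t * coth s + tanh (t / 2) / s` one has
`λ_N(p) ρ_N(p) = N t K(N t, t) - N (cosh t - 1)` and `1 - exp (-s) = s K(s, s) - (cosh s - 1)`,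
and the terms in `cosh` cancel between the two sides of the inequality. What remains says that
`A(x, y) = K(y, x y / c) - K(x, x y / c)` satisfies `A(u, c) < A(u, v) + A(v, c)`. As
`A(v, v) = 0`, this is the rectangle inequality for `A` on `[u, v] × [v, c]`, so it suffices that
`∂²A / ∂x∂y > 0` for `0 < x < y < c`. This mixed derivative is an increment over `[x, y]` of a
function of `s` whose derivative, multiplied by `sinh² s`, is increasing in `s` and equals
`cosh t - sinh t / t > 0` at `s = t = x y / c`.
-/

namespace ReflectedGray

open Real Set

section Calculus

theorem strictMonoOn_of_hasDerivAt_pos {D : Set ℝ} (hD : Convex ℝ D) {f f' : ℝ → ℝ}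
    (hf : ∀ x ∈ D, HasDerivAt f (f' x) x) (hf' : ∀ x ∈ interior D, 0 < f' x) :
    StrictMonoOn f D :=
  strictMonoOn_of_hasDerivWithinAt_pos hD
    (fun x hx ↦ (hf x hx).continuousAt.continuousWithinAt)
    (fun x hx ↦ (hf x (interior_subset hx)).hasDerivWithinAt) hf'

theorem add_lt_add_of_mixed_deriv_pos {F Fx Fxy : ℝ → ℝ → ℝ} {a b c d : ℝ}
    (hab : a < b) (hcd : c < d)
    (hF : ∀ x ∈ Icc a b, ∀ y ∈ Icc c d, HasDerivAt (fun x ↦ F x y) (Fx x y) x)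
    (hFx : ∀ x ∈ Ioo a b, ∀ y ∈ Icc c d, HasDerivAt (Fx x) (Fxy x y) y)
    (hpos : ∀ x ∈ Ioo a b, ∀ y ∈ Ioo c d, 0 < Fxy x y) :
    F a d + F b c < F a c + F b d := by
  have hc : c ∈ Icc c d := left_mem_Icc.2 hcd.le
  have hd : d ∈ Icc c d := right_mem_Icc.2 hcd.le
  have hFx_lt : ∀ x ∈ Ioo a b, Fx x c < Fx x d := fun x hx ↦
    strictMonoOn_of_hasDerivAt_pos (convex_Icc c d) (hFx x hx)
      (fun y hy ↦ hpos x hx y (interior_Icc.subset hy)) hc hd hcd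
  have hdiff : ∀ x ∈ Icc a b, HasDerivAt (fun x ↦ F x d - F x c) (Fx x d - Fx x c) x :=
    fun x hx ↦ (hF x hx d hd).sub (hF x hx c hc)
  have hmono : F a d - F a c < F b d - F b c :=
    strictMonoOn_of_hasDerivAt_pos (convex_Icc a b) hdiff
      (fun x hx ↦ sub_pos.2 (hFx_lt x (interior_Icc.subset hx)))
      (left_mem_Icc.2 hab.le) (right_mem_Icc.2 hab.le) hab
  linarith

variable {f φ : ℝ → ℝ} {x y c : ℝ}

theorem hasDerivAt_mul_sub_left {f' φ' : ℝ} (hf : HasDerivAt f f' (x * y / c))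
    (hφ : HasDerivAt φ φ' x) :
    HasDerivAt (fun x ↦ f (x * y / c) * (φ y - φ x))
      (y / c * f' * (φ y - φ x) - f (x * y / c) * φ') x := by
  have hscale : HasDerivAt (fun x ↦ x * y / c) (y / c) x := by
    simpa only [one_mul] using ((hasDerivAt_id' x).mul_const y).div_const c
  exact ((hf.comp x hscale).mul (hφ.const_sub (φ y))).congr_deriv (by
    simp only [Function.comp_apply]; ring)

theorem hasDerivAt_mul_sub_mixed {f' : ℝ → ℝ} {f'' φx' φy' : ℝ}
    (hf : HasDerivAt f (f' (x * y / c)) (x * y / c)) (hf' : HasDerivAt f' f'' (x * y / c))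
    (hφ : HasDerivAt φ φy' y) :
    HasDerivAt (fun y ↦ y / c * f' (x * y / c) * (φ y - φ x) - f (x * y / c) * φx')
      (((f' (x * y / c) + x * y / c * f'') * (φ y - φ x)
        + f' (x * y / c) * (y * φy' - x * φx')) / c) y := by
  have hscale : HasDerivAt (fun y ↦ x * y / c) (x / c) y := by
    simpa only [mul_one] using ((hasDerivAt_id' y).const_mul x).div_const c
  have hcoeff := ((hasDerivAt_id' y).div_const c).mul (hf'.comp y hscale)
  exact ((hcoeff.mul (hφ.sub_const (φ x))).sub
    ((hf.comp y hscale).mul_const φx')).congr_deriv (by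
      simp only [Function.comp_apply, Pi.mul_apply]; ring)

end Calculus

section Hyperbolic

variable {t : ℝ}

theorem sinh_lt_mul_cosh (ht : 0 < t) : sinh t < t * cosh t := by
  have hderiv (x : ℝ) : HasDerivAt (fun x ↦ x * cosh x - sinh x) (x * sinh x) x :=
    (((hasDerivAt_id' x).mul (hasDerivAt_cosh x)).sub (hasDerivAt_sinh x)).congr_deriv (by ring)
  have hmono : StrictMonoOn (fun x ↦ x * cosh x - sinh x) (Ici 0) :=
    strictMonoOn_of_hasDerivAt_pos (convex_Ici 0) (fun x _ ↦ hderiv x) fun x hx ↦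
      have hx : 0 < x := interior_Ici.subset hx
      mul_pos hx (sinh_pos_iff.2 hx)
  simpa using hmono self_mem_Ici ht.le ht

theorem lt_sinh_mul_cosh (ht : 0 < t) : t < sinh t * cosh t :=
  calc t < sinh t := self_lt_sinh_iff.2 ht
    _ ≤ sinh t * cosh t := le_mul_of_one_le_right (sinh_pos_iff.2 ht).le (one_le_cosh t)

theorem cosh_sub_one_lt_mul_sinh (ht : 0 < t) : cosh t - 1 < t * sinh t := by
  have hs : 0 < sinh t := sinh_pos_iff.2 ht
  nlinarith [mul_lt_mul_of_pos_left (sinh_lt_mul_cosh ht) hs, cosh_sq t, cosh_pos t,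
    mul_pos ht hs]

theorem strictMonoOn_sinh_div_self : StrictMonoOn (fun s ↦ sinh s / s) (Ioi 0) := by
  have hderiv (s : ℝ) (hs : s ∈ Ioi (0 : ℝ)) :
      HasDerivAt (fun s ↦ sinh s / s) ((cosh s * s - sinh s * 1) / s ^ 2) s :=
    (hasDerivAt_sinh s).div (hasDerivAt_id' s) (ne_of_gt hs)
  refine strictMonoOn_of_hasDerivAt_pos (convex_Ioi 0) hderiv (fun s hs ↦ ?_)
  have hs : 0 < s := interior_subset hs
  exact div_pos (by linarith [sinh_lt_mul_cosh hs]) (by positivity)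

/-- The hyperbolic cotangent. -/
noncomputable def coth (s : ℝ) : ℝ := cosh s / sinh s

theorem hasDerivAt_coth {s : ℝ} (hs : s ≠ 0) : HasDerivAt coth (-(1 / sinh s ^ 2)) s := by
  have hsinh : sinh s ≠ 0 := sinh_ne_zero.2 hs
  refine ((hasDerivAt_cosh s).div (hasDerivAt_sinh s) hsinh).congr_deriv ?_
  rw [← neg_div]
  congr 1
  linear_combination -cosh_sq s

theorem strictMonoOn_mul_coth : StrictMonoOn (fun s ↦ s * coth s) (Ioi 0) := by
  have hderiv (s : ℝ) (hs : s ∈ Ioi (0 : ℝ)) :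
      HasDerivAt (fun s ↦ s * coth s) (1 * coth s + s * -(1 / sinh s ^ 2)) s :=
    (hasDerivAt_id' s).mul (hasDerivAt_coth (ne_of_gt hs))
  refine strictMonoOn_of_hasDerivAt_pos (convex_Ioi 0) hderiv (fun s hs ↦ ?_)
  have hs : 0 < s := interior_subset hs
  have hquot : 1 * coth s + s * -(1 / sinh s ^ 2) = (sinh s * cosh s - s) / sinh s ^ 2 := by
    unfold coth
    field_simp
    ring
  rw [hquot]
  exact div_pos (sub_pos.2 (lt_sinh_mul_cosh hs)) (by positivity)

/-- The slope `(cosh t - 1) / t` of the chord of `cosh` over `[0, t]`. -/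
noncomputable def coshSlope (t : ℝ) : ℝ := (cosh t - 1) / t

/-- The derivative of `coshSlope`. -/
noncomputable def coshSlopeDeriv (t : ℝ) : ℝ := (t * sinh t - (cosh t - 1)) / t ^ 2

/-- The second derivative of `coshSlope`. -/
noncomputable def coshSlopeDeriv₂ (t : ℝ) : ℝ :=
  (t ^ 2 * cosh t - 2 * t * sinh t + 2 * (cosh t - 1)) / t ^ 3

/-- The function `tanh (t / 2)`, in its half-angle form. -/
noncomputable def tanhHalf (t : ℝ) : ℝ := sinh t / (1 + cosh t)

theorem hasDerivAt_coshSlope (ht : t ≠ 0) : HasDerivAt coshSlope (coshSlopeDeriv t) t :=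
  (((hasDerivAt_cosh t).sub_const 1).div (hasDerivAt_id' t) ht).congr_deriv (by
    unfold coshSlopeDeriv; ring)

theorem hasDerivAt_coshSlopeDeriv (ht : t ≠ 0) :
    HasDerivAt coshSlopeDeriv (coshSlopeDeriv₂ t) t := by
  have hnum := ((hasDerivAt_id' t).mul (hasDerivAt_sinh t)).sub ((hasDerivAt_cosh t).sub_const 1)
  refine (hnum.div (hasDerivAt_pow 2 t) (pow_ne_zero 2 ht)).congr_deriv ?_
  simp only [Pi.sub_apply, Pi.mul_apply]
  unfold coshSlopeDeriv₂
  field_simp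
  ring

theorem coshSlopeDeriv_pos (ht : 0 < t) : 0 < coshSlopeDeriv t :=
  div_pos (sub_pos.2 (cosh_sub_one_lt_mul_sinh ht)) (by positivity)

theorem hasDerivAt_tanhHalf (t : ℝ) : HasDerivAt tanhHalf (1 / (1 + cosh t)) t := by
  have hden : 1 + cosh t ≠ 0 := by linarith [cosh_pos t]
  refine ((hasDerivAt_sinh t).div ((hasDerivAt_cosh t).const_add 1) hden).congr_deriv ?_
  field_simp
  linear_combination cosh_sq t

theorem hasDerivAt_one_div_one_add_cosh (t : ℝ) :
    HasDerivAt (fun t ↦ 1 / (1 + cosh t)) (-(sinh t / (1 + cosh t) ^ 2)) t := by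
  have hden : 1 + cosh t ≠ 0 := by linarith [cosh_pos t]
  exact ((hasDerivAt_const t 1).div ((hasDerivAt_cosh t).const_add 1) hden).congr_deriv (by ring)

end Hyperbolic

section Kernel

/-- The kernel to which both sides of the exchange inequality reduce under `p = 1 - exp (-t)`:
the weight `λ_N(p) ρ_N(p)` is `N t * kernel (N t) t` up to a multiple of `cosh t - 1`. -/
noncomputable def kernel (s t : ℝ) : ℝ := coshSlope t * coth s + tanhHalf t / s

/-- The increment of `kernel · t` from `x` to `y` along the hyperbola `c * t = x * y`. -/
noncomputable def kernelIncrement (c x y : ℝ) : ℝ :=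
  kernel y (x * y / c) - kernel x (x * y / c)

/-- The function of `s` whose increment from `x` to `y`, at `t = x * y / c`, is `c` times the mixed
derivative of `kernelIncrement c` at `(x, y)`. -/
noncomputable def mixedPrimitive (t s : ℝ) : ℝ :=
  (coshSlopeDeriv t + t * coshSlopeDeriv₂ t) * coth s - coshSlopeDeriv t * (s / sinh s ^ 2)
    - t * (sinh t / (1 + cosh t) ^ 2) / s

/-- `sinh s ^ 2` times the derivative of `mixedPrimitive t` at `s`. -/
noncomputable def mixedDensity (t s : ℝ) : ℝ :=
  2 * coshSlopeDeriv t * (s * coth s - 1) - t * coshSlopeDeriv₂ t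
    + t * (sinh t / (1 + cosh t) ^ 2) * (sinh s / s) ^ 2

variable {t s c x y : ℝ}

theorem hasDerivAt_mixedPrimitive (hs : s ≠ 0) :
    HasDerivAt (mixedPrimitive t) (mixedDensity t s / sinh s ^ 2) s := by
  have hsinh : sinh s ≠ 0 := sinh_ne_zero.2 hs
  have hquot := (hasDerivAt_id' s).div ((hasDerivAt_sinh s).pow 2) (pow_ne_zero 2 hsinh)
  refine ((((hasDerivAt_coth hs).const_mul (coshSlopeDeriv t + t * coshSlopeDeriv₂ t)).sub
    (hquot.const_mul (coshSlopeDeriv t))).sub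
    ((hasDerivAt_inv hs).const_mul (t * (sinh t / (1 + cosh t) ^ 2)))).congr_deriv ?_
  simp only [Pi.pow_apply]
  unfold mixedDensity coth
  field_simp
  ring

theorem mixedDensity_self (ht : t ≠ 0) : mixedDensity t t = cosh t - sinh t / t := by
  have hsinh : sinh t ≠ 0 := sinh_ne_zero.2 ht
  have hden : 1 + cosh t ≠ 0 := by linarith [cosh_pos t]
  have hpow_four : sinh t ^ 4 = (cosh t - 1) ^ 2 * (1 + cosh t) ^ 2 := by
    linear_combination -(sinh t ^ 2 + cosh t ^ 2 - 1) * cosh_sq t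
  unfold mixedDensity coth coshSlopeDeriv coshSlopeDeriv₂
  field_simp
  linear_combination t * hpow_four - t * (1 + cosh t) ^ 2 * cosh_sq t

theorem mixedDensity_pos (ht : 0 < t) (hts : t ≤ s) : 0 < mixedDensity t s := by
  have hs : 0 < s := ht.trans_le hts
  have hslopeDeriv := coshSlopeDeriv_pos ht
  calc 0 < cosh t - sinh t / t := by
        rw [sub_pos, div_lt_iff₀' ht]
        exact sinh_lt_mul_cosh ht
    _ = mixedDensity t t := (mixedDensity_self ht.ne').symm
    _ ≤ mixedDensity t s := by
        have hcoth : t * coth t ≤ s * coth s := strictMonoOn_mul_coth.monotoneOn ht hs hts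
        have hslope : sinh t / t ≤ sinh s / s := strictMonoOn_sinh_div_self.monotoneOn ht hs hts
        unfold mixedDensity
        gcongr

theorem strictMonoOn_mixedPrimitive (ht : 0 < t) : StrictMonoOn (mixedPrimitive t) (Ici t) := by
  have hderiv (s : ℝ) (hs : s ∈ Ici t) := hasDerivAt_mixedPrimitive (t := t) (ht.trans_le hs).ne'
  refine strictMonoOn_of_hasDerivAt_pos (convex_Ici t) hderiv (fun s hs ↦ ?_)
  have hts : t ≤ s := interior_subset hs
  have hsinh : 0 < sinh s := sinh_pos_iff.2 (ht.trans_le hts)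
  exact div_pos (mixedDensity_pos ht hts) (by positivity)

/-- The derivative of `kernelIncrement c` in its first variable. -/
noncomputable def kernelIncrementDeriv (c x y : ℝ) : ℝ :=
  (y / c * coshSlopeDeriv (x * y / c) * (coth y - coth x)
      - coshSlope (x * y / c) * -(1 / sinh x ^ 2))
    + (y / c * (1 / (1 + cosh (x * y / c))) * (y⁻¹ - x⁻¹)
      - tanhHalf (x * y / c) * -(x ^ 2)⁻¹)

theorem hasDerivAt_kernelIncrement (hc : 0 < c) (hx : 0 < x) (hy : 0 < y) :
    HasDerivAt (fun x ↦ kernelIncrement c x y) (kernelIncrementDeriv c x y) x := by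
  have ht : x * y / c ≠ 0 := by positivity
  refine ((hasDerivAt_mul_sub_left (hasDerivAt_coshSlope ht) (hasDerivAt_coth hx.ne')).add
    (hasDerivAt_mul_sub_left (hasDerivAt_tanhHalf _) (hasDerivAt_inv hx.ne'))).congr_of_eventuallyEq
    (.of_forall fun x ↦ ?_)
  simp only [kernelIncrement, kernel, Pi.add_apply]
  ring

theorem hasDerivAt_kernelIncrementDeriv (hc : 0 < c) (hx : 0 < x) (hy : 0 < y) :
    HasDerivAt (kernelIncrementDeriv c x)
      ((mixedPrimitive (x * y / c) y - mixedPrimitive (x * y / c) x) / c) y := by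
  have ht : x * y / c ≠ 0 := by positivity
  refine ((hasDerivAt_mul_sub_mixed (hasDerivAt_coshSlope ht) (hasDerivAt_coshSlopeDeriv ht)
    (hasDerivAt_coth hy.ne')).add (hasDerivAt_mul_sub_mixed (hasDerivAt_tanhHalf _)
    (hasDerivAt_one_div_one_add_cosh _) (hasDerivAt_inv hy.ne'))).congr_deriv ?_
  unfold mixedPrimitive
  field_simp
  ring

theorem kernelIncrement_lt_add (hx : 0 < x) (hxy : x < y) (hyc : y < c) :
    kernelIncrement c x c < kernelIncrement c x y + kernelIncrement c y c := by
  have hy : 0 < y := hx.trans hxy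
  have hc : 0 < c := hy.trans hyc
  have hrect : kernelIncrement c x c + kernelIncrement c y y
      < kernelIncrement c x y + kernelIncrement c y c := by
    refine add_lt_add_of_mixed_deriv_pos hxy hyc
      (fun x' hx' y' hy' ↦ hasDerivAt_kernelIncrement hc (hx.trans_le hx'.1) (hy.trans_le hy'.1))
      (fun x' hx' y' hy' ↦
        hasDerivAt_kernelIncrementDeriv hc (hx.trans hx'.1) (hy.trans_le hy'.1))
      (fun x' hx' y' hy' ↦ div_pos (sub_pos.2 ?_) hc)
    have hx'0 : 0 < x' := hx.trans hx'.1
    have hx'y' : x' < y' := hx'.2.trans hy'.1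
    have ht : x' * y' / c ≤ x' := by
      rw [div_le_iff₀ hc]
      exact mul_le_mul_of_nonneg_left hy'.2.le hx'0.le
    have hy'0 : 0 < y' := hx'0.trans hx'y'
    exact strictMonoOn_mixedPrimitive (by positivity) ht (ht.trans hx'y'.le) hx'y'
  have hdiag : kernelIncrement c y y = 0 := sub_self _
  linarith

end Kernel

section Blocks

variable {t : ℝ}

theorem rho_one_sub_exp_neg (N : ℕ) (t : ℝ) : rho N (1 - exp (-t)) = 1 - exp (-(N * t)) := by
  rw [rho, sub_sub_cancel, ← exp_nat_mul, mul_neg]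

theorem one_sub_exp_neg_eq_kernel (ht : t ≠ 0) : 1 - exp (-t) = t * kernel t t - (cosh t - 1) := by
  have hsinh : sinh t ≠ 0 := sinh_ne_zero.2 ht
  have hden : 1 + cosh t ≠ 0 := by linarith [cosh_pos t]
  rw [← cosh_sub_sinh]
  unfold kernel coshSlope coth tanhHalf
  field_simp
  linear_combination -cosh t * cosh_sq t

theorem lam_mul_rho_one_sub {N : ℕ} (hN : N ≠ 0) {x : ℝ} (hx0 : 0 < x) (hx1 : x < 1) :
    lam N (1 - x) * rho N (1 - x) = (1 - x) / (1 + x)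
      + N * ((1 - x) ^ 2 / (2 * x)) * ((1 + (x ^ N) ^ 2) / (1 - (x ^ N) ^ 2) - 1) := by
  have hpred : x ^ (N - 1) = x ^ N / x := by
    rw [eq_div_iff hx0.ne', pow_sub_one_mul hN]
  have hpow1 : x ^ N < 1 := pow_lt_one₀ hx0.le hx1 hN
  have hpow0 : 0 < x ^ N := by positivity
  unfold lam rho Pud Pdd
  rw [sub_sub_cancel, hpred, mul_comm 2 N, pow_mul]
  generalize x ^ N = X at hpow0 hpow1 ⊢
  have hX : 1 - X ≠ 0 := by linarith
  have hX' : 1 + X ≠ 0 := by linarith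
  have hx : 1 - x ≠ 0 := by linarith
  have hx' : 1 + x ≠ 0 := by linarith
  rw [show 1 - X ^ 2 = (1 - X) * (1 + X) by ring, show 1 - x ^ 2 = (1 - x) * (1 + x) by ring,
    show 2 - (1 - X) = 1 + X by ring]
  field_simp
  ring

theorem cosh_sub_one_eq_exp_neg (t : ℝ) :
    cosh t - 1 = (1 - exp (-t)) ^ 2 / (2 * exp (-t)) := by
  rw [eq_div_iff (by positivity), ← cosh_sub_sinh]
  linear_combination cosh_sq t

theorem tanhHalf_eq_exp_neg (t : ℝ) : tanhHalf t = (1 - exp (-t)) / (1 + exp (-t)) := by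
  have hden : 1 + cosh t ≠ 0 := by linarith [cosh_pos t]
  rw [tanhHalf, div_eq_div_iff hden (by positivity), ← cosh_sub_sinh]
  linear_combination cosh_sq t

theorem coth_eq_exp_neg (s : ℝ) : coth s = (1 + exp (-s) ^ 2) / (1 - exp (-s) ^ 2) := by
  have hcosh : 1 + exp (-s) ^ 2 = 2 * exp (-s) * cosh s := by
    rw [← cosh_sub_sinh]; linear_combination -cosh_sq s
  have hsinh : 1 - exp (-s) ^ 2 = 2 * exp (-s) * sinh s := by
    rw [← cosh_sub_sinh]; linear_combination -cosh_sq s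
  rw [hcosh, hsinh, mul_div_mul_left _ _ (by positivity), coth]

theorem lam_mul_rho_one_sub_exp_neg {N : ℕ} (hN : N ≠ 0) (ht : 0 < t) :
    lam N (1 - exp (-t)) * rho N (1 - exp (-t))
      = N * t * kernel (N * t) t - N * (cosh t - 1) := by
  have hpow : exp (-t) ^ N = exp (-(N * t)) := by rw [← exp_nat_mul, mul_neg]
  rw [lam_mul_rho_one_sub hN (exp_pos _) (by simpa using ht), hpow, ← coth_eq_exp_neg,
    ← cosh_sub_one_eq_exp_neg, ← tanhHalf_eq_exp_neg, kernel, coshSlope]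
  field_simp
  ring

theorem exchange_side_eq_kernel {M N : ℕ} (hM : M ≠ 0) (hN : N ≠ 0) (ht : 0 < t) :
    (1 - lam N (1 - exp (-t))) * rho N (1 - exp (-t)) * M
        - lam M (rho N (1 - exp (-t))) * rho (M * N) (1 - exp (-t))
      = M * N * (cosh t - 1) - M * (N * t) *
        (kernel (N * t) t - kernel (N * t) (N * t) + kernel (M * (N * t)) (N * t)) := by
  have hNt : 0 < N * t := by positivity
  have hinner := lam_mul_rho_one_sub_exp_neg hN ht
  have houter := lam_mul_rho_one_sub_exp_neg hM hNt
  have hcomp : rho (M * N) (1 - exp (-t)) = rho M (1 - exp (-(N * t))) := by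
    rw [rho_one_sub_exp_neg, rho_one_sub_exp_neg, Nat.cast_mul, mul_assoc]
  have hdiag := one_sub_exp_neg_eq_kernel hNt.ne'
  rw [hcomp]
  rw [rho_one_sub_exp_neg N] at hinner ⊢
  linear_combination (M : ℝ) * hdiag - M * hinner - houter

end Blocks

end ReflectedGray

open ReflectedGray Real in
theorem reflected_gray_column_exchange_inequality_general (N2 N3 : ℕ) (h1 : 2 ≤ N2)
    (h23 : N2 < N3) (p : ℝ) (hp0 : 0 < p) (hp1 : p < 1) :
    (1 - lam N3 p) * rho N3 p * (N2 : ℝ) - lam N2 (rho N3 p) * rho (N2 * N3) p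
      < (1 - lam N2 p) * rho N2 p * (N3 : ℝ) - lam N3 (rho N2 p) * rho (N2 * N3) p := by
  obtain ⟨t, ht, rfl⟩ : ∃ t, 0 < t ∧ p = 1 - exp (-t) :=
    ⟨-log (1 - p), neg_pos.2 (log_neg (by linarith) (by linarith)), by
      rw [neg_neg, exp_log (by linarith), sub_sub_cancel]⟩
  have h2 : (1 : ℝ) < N2 := by exact_mod_cast h1
  have h3 : (N2 : ℝ) < N3 := by exact_mod_cast h23
  have hN3 : (0 : ℝ) < N3 := by linarith
  have hc : 0 < N2 * (N3 * t) := by positivity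
  have hsuper : kernelIncrement (N2 * (N3 * t)) (N2 * t) (N2 * (N3 * t))
      < kernelIncrement (N2 * (N3 * t)) (N2 * t) (N3 * t)
        + kernelIncrement (N2 * (N3 * t)) (N3 * t) (N2 * (N3 * t)) :=
    kernelIncrement_lt_add (by positivity) (by gcongr) (lt_mul_of_one_lt_left (by positivity) h2)
  have hscale : N2 * t * (N3 * t) / (N2 * (N3 * t)) = t := by field_simp
  simp only [kernelIncrement, mul_div_cancel_right₀ _ hc.ne', hscale] at hsuper
  have hlhs := exchange_side_eq_kernel (show N2 ≠ 0 by omega) (show N3 ≠ 0 by omega) ht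
  have hrhs := exchange_side_eq_kernel (show N3 ≠ 0 by omega) (show N2 ≠ 0 by omega) ht
  rw [mul_comm N3 N2, mul_left_comm (N3 : ℝ)] at hrhs
  rw [hlhs, hrhs]
  linear_combination N2 * (N3 * t) * hsuper

/-- For `2 ≤ N₂ < N₃ ≤ 30` and `0 < p < 1`:
`(1 − λ_{N₃}(p))·ρ_{N₃}(p)·N₂ − λ_{N₂}(ρ_{N₃}(p))·ρ_{N₂N₃}(p)
  < (1 − λ_{N₂}(p))·ρ_{N₂}(p)·N₃ − λ_{N₃}(ρ_{N₂}(p))·ρ_{N₂N₃}(p)`. -/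
theorem reflected_gray_column_exchange_inequality (N2 N3 : ℕ) (h1 : 2 ≤ N2)
    (h23 : N2 < N3) (h30 : N3 ≤ 30) (p : ℝ) (hp0 : 0 < p) (hp1 : p < 1) :
    (1 - lam N3 p) * rho N3 p * (N2 : ℝ) - lam N2 (rho N3 p) * rho (N2 * N3) p
      < (1 - lam N2 p) * rho N2 p * (N3 : ℝ) - lam N3 (rho N2 p) * rho (N2 * N3) p :=
  reflected_gray_column_exchange_inequality_general N2 N3 h1 h23 p hp0 hp1
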